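/- arXiv:1605.02485 — 2 statements merged into one kernel-verified Lean document; each statement's English description precedes it below -/
import Mathlib

section
/- Let T : ℍⁿ ⇉ V₁ be a maximal H-monotone set-valued map with dom(T) = ℍⁿ. Then T is locally bounded if and only if T is upper semicontinuous. -/
open scoped RealInnerProductSpace Pointwise

noncomputable section

abbrev E (n : ℕ) := EuclideanSpace ℝ (Fin n)
abbrev Heis (n : ℕ) := E n × E n × ℝ
abbrev V1 (n : ℕ) := WithLp 2 (E n × E n)

/-- The projection ξ₁(x,y,t) = (x,y) onto the first layer V₁ ≅ ℝ²ⁿ. -/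
def xi1 {n : ℕ} (η : Heis n) : V1 n := (WithLp.equiv 2 (E n × E n)).symm (η.1, η.2.1)

/-- The horizontal plane through η₀. -/
def Hplane {n : ℕ} (η₀ : Heis n) : Set (Heis n) :=
  {η | η.2.2 = η₀.2.2 + 2 * (⟪η₀.2.1, η.1⟫ - ⟪η₀.1, η.2.1⟫)}

/-- H-monotonicity of a set-valued map T : ℍⁿ ⇉ V₁. -/
def IsHMonotone {n : ℕ} (T : Heis n → Set (V1 n)) : Prop :=
  ∀ η η', η' ∈ Hplane η → ∀ v ∈ T η, ∀ v' ∈ T η', 0 ≤ ⟪v - v', xi1 η - xi1 η'⟫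

/-- Maximal H-monotonicity. -/
def IsMaximalHMonotone {n : ℕ} (T : Heis n → Set (V1 n)) : Prop :=
  IsHMonotone T ∧
    ∀ η v, (∀ η' ∈ Hplane η, ∀ v' ∈ T η', 0 ≤ ⟪v - v', xi1 η - xi1 η'⟫) → v ∈ T η

/-- Heisenberg group law. -/
def hmul {n : ℕ} (η η' : Heis n) : Heis n :=
  (η.1 + η'.1, η.2.1 + η'.2.1,
    η.2.2 + η'.2.2 + 2 * (⟪η'.1, η.2.1⟫ - ⟪η.1, η'.2.1⟫))

/-- Heisenberg group inverse. -/
def hinv {n : ℕ} (η : Heis n) : Heis n := (-η.1, -η.2.1, -η.2.2)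

/-- The Korányi gauge N(x,y,t) = ((‖x‖²+‖y‖²)² + t²)^(1/4). -/
def gaugeN {n : ℕ} (η : Heis n) : ℝ :=
  ((‖η.1‖ ^ 2 + ‖η.2.1‖ ^ 2) ^ 2 + η.2.2 ^ 2) ^ ((1 : ℝ) / 4)

/-- The Korányi–Cygan distance d_H(η,η') = N(η'⁻¹ ∘ η). -/
def dH {n : ℕ} (η η' : Heis n) : ℝ := gaugeN (hmul (hinv η') η)

/-- Upper semicontinuity of a set-valued map T : ℍⁿ ⇉ V₁, w.r.t. the Korányi–Cygan distance. -/
def IsUSC {n : ℕ} (T : Heis n → Set (V1 n)) : Prop :=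
  ∀ η : Heis n, ∀ ε > (0 : ℝ), ∃ δ > (0 : ℝ), ∀ η' : Heis n,
    dH η' η < δ → T η' ⊆ T η + Metric.ball (0 : V1 n) ε

/-- Local boundedness of a set-valued map T : ℍⁿ ⇉ V₁, w.r.t. the Korányi–Cygan distance. -/
def IsLocallyBounded {n : ℕ} (T : Heis n → Set (V1 n)) : Prop :=
  ∀ η₀ : Heis n, ∃ r > (0 : ℝ), ∃ M : ℝ, ∀ η : Heis n, dH η η₀ ≤ r → ∀ v ∈ T η, ‖v‖ ≤ M

/-! Upper semicontinuity bounds `T` near `η` by the set `T η`, and `T η` is bounded by uniform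
boundedness: given `p`, any value of `T` at the point of `H_η` above `ξ₁ η + p` bounds `⟪p, ·⟫` from
above on `T η`.

Conversely, compactness reduces upper semicontinuity of a locally bounded `T` to closedness of its
graph. Let `(θ, v) → (η, v₀)` in the graph and `v' ∈ T η'` with `η' ∈ H_η`. Monotonicity does not
compare `v` with `v'`, since `η'` need not lie in `H_θ`. But there are points `z(θ) ∈ H_θ ∩ H_η'`
with `ξ₁ (z(θ)) → (ξ₁ η + ξ₁ η') / 2`. Add the two monotonicity inequalities through a value
`w ∈ T (z(θ))`: in the limit `w` is only paired with `ξ₁ η + ξ₁ η' - 2 ξ₁ (z(η)) = 0`, so that, `w`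
being bounded, `⟪v₀ - v', ξ₁ η - ξ₁ η'⟫ ≥ 0`, and maximality gives `v₀ ∈ T η`. -/

open Filter Topology Bornology

section InnerProductSpace

variable {F : Type*} [NormedAddCommGroup F] [InnerProductSpace ℝ F]

lemma isBounded_of_forall_bddAbove_inner [CompleteSpace F] {s : Set F}
    (h : ∀ p : F, BddAbove ((fun v ↦ ⟪p, v⟫) '' s)) : IsBounded s := by
  obtain ⟨C, hC⟩ := banach_steinhaus (g := fun v : s ↦ innerSL ℝ (v : F)) fun p ↦ by
    obtain ⟨a, ha⟩ := h p
    obtain ⟨b, hb⟩ := h (-p)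
    refine ⟨max a b, fun ⟨v, hv⟩ ↦ ?_⟩
    have hva : ⟪p, v⟫ ≤ a := ha ⟨v, hv, rfl⟩
    have hvb : -⟪p, v⟫ ≤ b := inner_neg_left (𝕜 := ℝ) p v ▸ hb ⟨v, hv, rfl⟩
    rw [innerSL_apply_apply, real_inner_comm, Real.norm_eq_abs]
    exact abs_le'.2 ⟨hva.trans (le_max_left a b), hvb.trans (le_max_right a b)⟩
  exact isBounded_iff_forall_norm_le.2 ⟨C, fun v hv ↦ by simpa using hC ⟨v, hv⟩⟩

lemma inner_add_inner_add_norm_mul_norm_nonneg {v v' w a a' z : F}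
    (h : 0 ≤ ⟪v - w, a - z⟫) (h' : 0 ≤ ⟪v' - w, a' - z⟫) :
    0 ≤ ⟪v, a - z⟫ + ⟪v', a' - z⟫ + ‖w‖ * ‖a + a' - (2 : ℝ) • z‖ := by
  have hsum : ⟪w, a - z⟫ + ⟪w, a' - z⟫ = ⟪w, a + a' - (2 : ℝ) • z⟫ := by
    rw [← inner_add_right]
    congr 1
    module
  have hcs := neg_le_of_abs_le (abs_real_inner_le_norm w (a + a' - (2 : ℝ) • z))
  rw [inner_sub_left] at h h'
  linarith

lemma inner_sub_midpoint_add_inner_sub_midpoint (v v' a a' : F) :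
    ⟪v, a - midpoint ℝ a a'⟫ + ⟪v', a' - midpoint ℝ a a'⟫ = ⟪v - v', a - a'⟫ / 2 := by
  rw [left_sub_midpoint, right_sub_midpoint, ← neg_sub a a', smul_neg, inner_neg_right,
    inner_smul_right, inner_smul_right, inner_sub_left, invOf_eq_inv]
  ring

/-- The orthogonal projection of `m` onto the hyperplane `{q | ⟪a, q⟫ = s}`; it moves
continuously with `a ≠ 0` and `s`. For `a = 0` it is `m`, as division by zero gives zero. -/
def hyperplaneProj (a : F) (s : ℝ) (m : F) : F := m + ((s - ⟪a, m⟫) / ‖a‖ ^ 2) • a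

lemma inner_hyperplaneProj {a : F} (ha : a ≠ 0) (s : ℝ) (m : F) :
    ⟪a, hyperplaneProj a s m⟫ = s := by
  have : ‖a‖ ^ 2 ≠ 0 := by simpa using ha
  rw [hyperplaneProj, inner_add_right, real_inner_smul_right, real_inner_self_eq_norm_sq,
    div_mul_cancel₀ _ this, add_sub_cancel]

lemma hyperplaneProj_of_inner_eq {a m : F} {s : ℝ} (h : ⟪a, m⟫ = s) :
    hyperplaneProj a s m = m := by
  simp [hyperplaneProj, h]

lemma continuousAt_hyperplaneProj {X : Type*} [TopologicalSpace X] {a : X → F} {s : X → ℝ} {x : X}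
    (ha : ContinuousAt a x) (hs : ContinuousAt s x) (hne : a x ≠ 0) (m : F) :
    ContinuousAt (fun y ↦ hyperplaneProj (a y) (s y) m) x := by
  have : ‖a x‖ ^ 2 ≠ 0 := by simpa using hne
  unfold hyperplaneProj
  fun_prop (disch := assumption)

end InnerProductSpace

variable {n : ℕ}

section Geometry

/-- The complex structure `(x, y) ↦ (y, -x)` on `V₁`. It encodes the symplectic form of the group
law: `⟪J p, q⟫ = ⟪y, x'⟫ - ⟪x, y'⟫` for `p = (x, y)` and `q = (x', y')`. -/
def symplJ : V1 n →ₗᵢ[ℝ] V1 n where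
  toFun p := WithLp.toLp 2 (p.snd, -p.fst)
  map_add' p q := WithLp.ofLp_injective 2 (Prod.ext rfl (neg_add p.fst q.fst))
  map_smul' c p := WithLp.ofLp_injective 2 (Prod.ext rfl (smul_neg c p.fst).symm)
  norm_map' p := by
    change ‖WithLp.toLp 2 (p.snd, -p.fst)‖ = ‖p‖
    simp only [WithLp.prod_norm_eq_of_L2, WithLp.toLp_fst, WithLp.toLp_snd, norm_neg, add_comm]

lemma inner_symplJ (p q : V1 n) : ⟪symplJ p, q⟫ = ⟪p.snd, q.fst⟫ - ⟪p.fst, q.snd⟫ := by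
  simp [symplJ, WithLp.prod_inner_apply, sub_eq_add_neg]

lemma inner_symplJ_swap (p q : V1 n) : ⟪symplJ p, q⟫ = -⟪symplJ q, p⟫ := by
  rw [inner_symplJ, inner_symplJ, real_inner_comm q.fst, real_inner_comm q.snd, neg_sub]

@[simp]
lemma inner_symplJ_self (p : V1 n) : ⟪symplJ p, p⟫ = 0 :=
  self_eq_neg.1 (inner_symplJ_swap p p)

@[fun_prop]
lemma continuous_xi1 : Continuous (xi1 : Heis n → V1 n) :=
  (WithLp.prod_continuous_toLp 2 (E n) (E n)).comp (by fun_prop)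

lemma mem_Hplane_iff {η ζ : Heis n} :
    η ∈ Hplane ζ ↔ η.2.2 = ζ.2.2 + 2 * ⟪symplJ (xi1 ζ), xi1 η⟫ := by
  rw [inner_symplJ]
  rfl

/-- The point of the horizontal plane through `ζ` that lies above `p`. -/
def horizontalLift (ζ : Heis n) (p : V1 n) : Heis n :=
  (p.fst, p.snd, ζ.2.2 + 2 * ⟪symplJ (xi1 ζ), p⟫)

@[simp]
lemma xi1_horizontalLift (ζ : Heis n) (p : V1 n) : xi1 (horizontalLift ζ p) = p := rfl

lemma horizontalLift_mem_Hplane (ζ : Heis n) (p : V1 n) : horizontalLift ζ p ∈ Hplane ζ :=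
  mem_Hplane_iff.2 rfl

lemma horizontalLift_xi1_of_mem_Hplane {η ζ : Heis n} (h : η ∈ Hplane ζ) :
    horizontalLift ζ (xi1 η) = η := by
  rw [horizontalLift, ← mem_Hplane_iff.1 h]
  rfl

lemma horizontalLift_mem_Hplane_iff {ζ θ : Heis n} {p : V1 n} :
    horizontalLift ζ p ∈ Hplane θ ↔ ⟪symplJ (xi1 θ - xi1 ζ), p⟫ = (ζ.2.2 - θ.2.2) / 2 := by
  rw [mem_Hplane_iff, map_sub, inner_sub_left, xi1_horizontalLift, horizontalLift]
  constructor <;> intro h <;> linarith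

@[fun_prop]
lemma continuous_horizontalLift (ζ : Heis n) : Continuous (horizontalLift ζ) := by
  have hfst := WithLp.prod_continuous_ofLp 2 (E n) (E n)
  exact (continuous_fst.comp hfst).prodMk ((continuous_snd.comp hfst).prodMk (by fun_prop))

lemma exists_mem_Hplane_inter_xi1_eq_midpoint {η η' : Heis n} (h : η' ∈ Hplane η) :
    ∃ ζ ∈ Hplane η ∩ Hplane η', xi1 ζ = midpoint ℝ (xi1 η) (xi1 η') := by
  refine ⟨horizontalLift η' (midpoint ℝ (xi1 η) (xi1 η')),
    ⟨horizontalLift_mem_Hplane_iff.2 ?_, horizontalLift_mem_Hplane _ _⟩, rfl⟩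
  rw [mem_Hplane_iff.1 h, midpoint_eq_smul_add, real_inner_smul_right, map_sub, inner_sub_left,
    inner_add_right, inner_add_right, inner_symplJ_self, inner_symplJ_self,
    inner_symplJ_swap (xi1 η'), invOf_eq_inv]
  ring

lemma exists_continuousAt_mem_Hplane_inter {η η' ζ : Heis n} (hne : xi1 η ≠ xi1 η')
    (hζ : ζ ∈ Hplane η ∩ Hplane η') :
    ∃ z : Heis n → Heis n, ContinuousAt z η ∧ z η = ζ ∧
      ∀ᶠ θ in 𝓝 η, z θ ∈ Hplane θ ∩ Hplane η' := by
  have hJ {θ : Heis n} (h : xi1 θ ≠ xi1 η') : symplJ (xi1 θ - xi1 η') ≠ 0 :=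
    (map_ne_zero_iff _ symplJ.injective).2 (sub_ne_zero.2 h)
  have hinner : ⟪symplJ (xi1 η - xi1 η'), xi1 ζ⟫ = (η'.2.2 - η.2.2) / 2 := by
    rw [← horizontalLift_mem_Hplane_iff, horizontalLift_xi1_of_mem_Hplane hζ.2]
    exact hζ.1
  have hcont : Continuous fun θ ↦ symplJ (xi1 θ - xi1 η') :=
    symplJ.continuous.comp (continuous_xi1.sub continuous_const)
  refine ⟨fun θ ↦ horizontalLift η'
    (hyperplaneProj (symplJ (xi1 θ - xi1 η')) ((η'.2.2 - θ.2.2) / 2) (xi1 ζ)), ?_, ?_, ?_⟩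
  · exact (continuous_horizontalLift η').continuousAt.comp (f := fun θ ↦ hyperplaneProj _ _ _)
      (continuousAt_hyperplaneProj hcont.continuousAt (by fun_prop) (hJ hne) _)
  · simp only [hyperplaneProj_of_inner_eq hinner, horizontalLift_xi1_of_mem_Hplane hζ.2]
  · filter_upwards [continuous_xi1.continuousAt.eventually_ne hne] with θ hθ
    exact ⟨horizontalLift_mem_Hplane_iff.2 (inner_hyperplaneProj (hJ hθ) _ _),
      horizontalLift_mem_Hplane _ _⟩

end Geometry

section KoranyiTopology

lemma gaugeN_nonneg (η : Heis n) : 0 ≤ gaugeN η := by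
  unfold gaugeN
  positivity

lemma gaugeN_pow_four (η : Heis n) : gaugeN η ^ 4 = ‖xi1 η‖ ^ 4 + η.2.2 ^ 2 := by
  have hxi : ‖xi1 η‖ ^ 2 = ‖η.1‖ ^ 2 + ‖η.2.1‖ ^ 2 := WithLp.prod_norm_sq_eq_of_L2 (xi1 η)
  rw [gaugeN, ← hxi, ← pow_mul, ← Real.rpow_natCast, ← Real.rpow_mul (by positivity)]
  norm_num

lemma norm_xi1_le_gaugeN (η : Heis n) : ‖xi1 η‖ ≤ gaugeN η := by
  refine le_of_pow_le_pow_left₀ four_ne_zero (gaugeN_nonneg η) ?_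
  rw [gaugeN_pow_four]
  exact le_add_of_nonneg_right (sq_nonneg _)

lemma abs_vertical_le_gaugeN_sq (η : Heis n) : |η.2.2| ≤ gaugeN η ^ 2 := by
  refine abs_le_of_sq_le_sq ?_ (sq_nonneg _)
  rw [← pow_mul, gaugeN_pow_four]
  exact le_add_of_nonneg_left (by positivity)

lemma xi1_hmul_hinv (ζ η : Heis n) : xi1 (hmul (hinv ζ) η) = xi1 η - xi1 ζ := by
  simp [xi1, hmul, hinv, ← WithLp.toLp_sub, neg_add_eq_sub]

lemma vertical_hmul_hinv (ζ η : Heis n) :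
    (hmul (hinv ζ) η).2.2 = η.2.2 - ζ.2.2 - 2 * ⟪symplJ (xi1 ζ), xi1 η⟫ := by
  rw [inner_symplJ]
  simp only [hmul, hinv, inner_neg_right, inner_neg_left, xi1, WithLp.equiv_symm_apply,
    WithLp.toLp_fst, WithLp.toLp_snd]
  rw [real_inner_comm]
  ring

lemma dH_nonneg (η ζ : Heis n) : 0 ≤ dH η ζ := gaugeN_nonneg _

lemma dH_self (η : Heis n) : dH η η = 0 := by
  rw [← pow_eq_zero_iff four_ne_zero, dH, gaugeN_pow_four, xi1_hmul_hinv, vertical_hmul_hinv,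
    inner_symplJ_self]
  simp

lemma continuous_dH_left (ζ : Heis n) : Continuous fun η ↦ dH η ζ := by
  unfold dH gaugeN hmul hinv
  exact Continuous.rpow_const (by fun_prop) fun _ ↦ Or.inr (by norm_num)

lemma tendsto_xi1_comap_dH (ζ : Heis n) :
    Tendsto xi1 (comap (dH · ζ) (𝓝 0)) (𝓝 (xi1 ζ)) := by
  refine tendsto_iff_norm_sub_tendsto_zero.2 (squeeze_zero (fun _ ↦ norm_nonneg _) (fun η ↦ ?_)
    tendsto_comap)
  rw [← xi1_hmul_hinv]
  exact norm_xi1_le_gaugeN _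

lemma tendsto_vertical_comap_dH (ζ : Heis n) :
    Tendsto (fun η : Heis n ↦ η.2.2) (comap (dH · ζ) (𝓝 0)) (𝓝 ζ.2.2) := by
  have hoffset : Tendsto (fun η ↦ (hmul (hinv ζ) η).2.2) (comap (dH · ζ) (𝓝 0)) (𝓝 0) :=
    squeeze_zero_norm (fun η ↦ abs_vertical_le_gaugeN_sq _)
      (by simpa only [zero_pow two_ne_zero] using! (tendsto_comap (f := (dH · ζ)) (x := 𝓝 0)).pow 2)
  have hsympl : Tendsto (fun η ↦ 2 * ⟪symplJ (xi1 ζ), xi1 η⟫) (comap (dH · ζ) (𝓝 0)) (𝓝 0) := by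
    simpa only [inner_symplJ_self, mul_zero] using
      ((tendsto_const_nhds (x := symplJ (xi1 ζ))).inner (𝕜 := ℝ)
        (tendsto_xi1_comap_dH ζ)).const_mul 2
  simpa only [vertical_hmul_hinv, sub_add_cancel, add_zero, zero_add] using
    (hoffset.add hsympl).add_const ζ.2.2

lemma comap_dH_nhds_zero (ζ : Heis n) : comap (dH · ζ) (𝓝 0) = 𝓝 ζ := by
  refine le_antisymm ?_ (map_le_iff_le_comap.1 ?_)
  · have hxy := (WithLp.prod_continuous_ofLp 2 (E n) (E n)).continuousAt.tendsto.comp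
      (tendsto_xi1_comap_dH ζ)
    exact hxy.fst_nhds.prodMk_nhds (hxy.snd_nhds.prodMk_nhds (tendsto_vertical_comap_dH ζ))
  · exact (continuous_dH_left ζ).tendsto' ζ 0 (dH_self ζ)

lemma nhds_basis_dH_lt (ζ : Heis n) : (𝓝 ζ).HasBasis (0 < ·) fun δ ↦ {η | dH η ζ < δ} := by
  rw [← comap_dH_nhds_zero]
  convert Metric.nhds_basis_ball.comap (dH · ζ) using 2 with δ
  ext η
  simp [abs_of_nonneg (dH_nonneg η ζ)]

lemma nhds_basis_dH_le (ζ : Heis n) : (𝓝 ζ).HasBasis (0 < ·) fun δ ↦ {η | dH η ζ ≤ δ} := by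
  rw [← comap_dH_nhds_zero]
  convert Metric.nhds_basis_closedBall.comap (dH · ζ) using 2 with δ
  ext η
  simp [abs_of_nonneg (dH_nonneg η ζ)]

end KoranyiTopology

section SetValuedMaps

variable {T : Heis n → Set (V1 n)}

lemma isUSC_iff_eventually_subset_thickening :
    IsUSC T ↔ ∀ η, ∀ ε > 0, ∀ᶠ θ in 𝓝 η, T θ ⊆ Metric.thickening ε (T η) := by
  simp only [IsUSC, add_ball_zero, (nhds_basis_dH_lt _).eventually_iff, Set.mem_ofPred_eq]

lemma isLocallyBounded_iff_eventually_subset_closedBall :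
    IsLocallyBounded T ↔ ∀ η, ∃ M, ∀ᶠ θ in 𝓝 η, T θ ⊆ Metric.closedBall 0 M := by
  simp only [IsLocallyBounded, (nhds_basis_dH_le _).eventually_iff, Set.mem_ofPred_eq,
    Set.subset_def, mem_closedBall_zero_iff]
  refine forall_congr' fun η ↦ ⟨?_, ?_⟩
  · exact fun ⟨r, hr, M, h⟩ ↦ ⟨M, r, hr, h⟩
  · exact fun ⟨M, r, hr, h⟩ ↦ ⟨r, hr, M, h⟩

lemma isUSC_of_upperHemicontinuous (h : UpperHemicontinuous T) : IsUSC T :=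
  isUSC_iff_eventually_subset_thickening.2 fun η _ hε ↦
    h.forall_isOpen η _ Metric.isOpen_thickening (Metric.self_subset_thickening hε _)

lemma IsUSC.isLocallyBounded (h : IsUSC T) (hbdd : ∀ η, IsBounded (T η)) :
    IsLocallyBounded T := by
  refine isLocallyBounded_iff_eventually_subset_closedBall.2 fun η ↦ ?_
  obtain ⟨M, hM⟩ := ((hbdd η).thickening (δ := 1)).subset_closedBall 0
  exact ⟨M, (isUSC_iff_eventually_subset_thickening.1 h η 1 one_pos).mono fun _ hθ ↦ hθ.trans hM⟩

lemma IsHMonotone.isBounded_apply (hT : IsHMonotone T) (hdom : ∀ η, (T η).Nonempty) (η : Heis n) :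
    IsBounded (T η) := by
  refine isBounded_of_forall_bddAbove_inner fun p ↦ ?_
  obtain ⟨w, hw⟩ := hdom (horizontalLift η (xi1 η + p))
  refine ⟨⟪p, w⟫, ?_⟩
  rintro _ ⟨v, hv, rfl⟩
  have h := hT _ _ (horizontalLift_mem_Hplane η _) v hv w hw
  rw [xi1_horizontalLift, sub_add_cancel_left, inner_neg_right, inner_sub_left, real_inner_comm,
    real_inner_comm p w] at h
  linarith

lemma IsHMonotone.inner_nonneg_of_tendsto (hT : IsHMonotone T) (hdom : ∀ η, (T η).Nonempty)
    (hb : IsLocallyBounded T) {ι : Type*} {l : Filter ι} [l.NeBot] {u : ι → Heis n}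
    {v : ι → V1 n} {η : Heis n} {v₀ : V1 n} (hu : Tendsto u l (𝓝 η)) (hv : Tendsto v l (𝓝 v₀))
    (huv : ∀ i, v i ∈ T (u i)) {η' : Heis n} (hη' : η' ∈ Hplane η) {v' : V1 n} (hv' : v' ∈ T η') :
    0 ≤ ⟪v₀ - v', xi1 η - xi1 η'⟫ := by
  rcases eq_or_ne (xi1 η) (xi1 η') with heq | hne
  · simp [heq]
  obtain ⟨ζ, hζ, hmid⟩ := exists_mem_Hplane_inter_xi1_eq_midpoint hη'
  obtain ⟨z, hzcont, rfl, hz⟩ := exists_continuousAt_mem_Hplane_inter hne hζ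
  choose w hw using fun i ↦ hdom (z (u i))
  obtain ⟨M, hM⟩ := isLocallyBounded_iff_eventually_subset_closedBall.1 hb (z η)
  have hzu : Tendsto (fun i ↦ z (u i)) l (𝓝 (z η)) := hzcont.tendsto.comp hu
  have hnonneg : ∀ᶠ i in l, 0 ≤ ⟪v i, xi1 (u i) - xi1 (z (u i))⟫ + ⟪v', xi1 η' - xi1 (z (u i))⟫ +
      M * ‖xi1 (u i) + xi1 η' - (2 : ℝ) • xi1 (z (u i))‖ := by
    filter_upwards [hu.eventually hz, hzu.eventually hM] with i hzi hMi
    refine (inner_add_inner_add_norm_mul_norm_nonneg (hT _ _ hzi.1 _ (huv i) _ (hw i))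
      (hT _ _ hzi.2 _ hv' _ (hw i))).trans ?_
    gcongr
    exact mem_closedBall_zero_iff.1 (hMi (hw i))
  have hξu : Tendsto (fun i ↦ xi1 (u i)) l (𝓝 (xi1 η)) := (continuous_xi1.tendsto η).comp hu
  have hξz : Tendsto (fun i ↦ xi1 (z (u i))) l (𝓝 (midpoint ℝ (xi1 η) (xi1 η'))) :=
    hmid ▸ (continuous_xi1.tendsto _).comp hzu
  have hlim := ge_of_tendsto (((hv.inner (hξu.sub hξz)).add (tendsto_const_nhds.inner
    (tendsto_const_nhds.sub hξz))).add
      (((hξu.add_const _).sub (hξz.const_smul (2 : ℝ))).norm.const_mul M)) hnonneg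
  rw [inner_sub_midpoint_add_inner_sub_midpoint, two_smul, midpoint_add_self, sub_self,
    norm_zero, mul_zero, add_zero] at hlim
  linarith

lemma IsMaximalHMonotone.upperHemicontinuous (hT : IsMaximalHMonotone T)
    (hdom : ∀ η, (T η).Nonempty) (hb : IsLocallyBounded T) : UpperHemicontinuous T := by
  refine upperHemicontinuous_iff.2 fun η ↦ ?_
  obtain ⟨M, hM⟩ := isLocallyBounded_iff_eventually_subset_closedBall.1 hb η
  refine UpperHemicontinuousAt.of_sequences (isCompact_closedBall 0 M).isSeqCompact hM ?_
  exact fun u hu v huv v₀ hv ↦ hT.2 η v₀ fun _ hη' _ hv' ↦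
    hT.1.inner_nonneg_of_tendsto hdom hb hu hv huv hη' hv'

end SetValuedMaps

/-- Theorem 2.7: for a maximal H-monotone map with full domain, local boundedness is
equivalent to upper semicontinuity. -/
theorem locallyBounded_iff_usc {n : ℕ} (hn : 1 ≤ n)
    (T : Heis n → Set (V1 n)) (hT : IsMaximalHMonotone T)
    (hdom : ∀ η, (T η).Nonempty) :
    IsLocallyBounded T ↔ IsUSC T := by
  refine ⟨fun hb ↦ ?_, fun husc ↦ ?_⟩
  · exact isUSC_of_upperHemicontinuous (hT.upperHemicontinuous hdom hb)
  · exact husc.isLocallyBounded (hT.1.isBounded_apply hdom)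
end
end

section
/- Let T : ℍⁿ ⇉ V₁ be a maximal H-monotone set-valued map with dom(T) = ℍⁿ. Then the restriction of T to any vertical segment is bounded: for every fixed x, y ∈ ℝⁿ and every compact interval I ⊆ ℝ, letting L = {(x,y,t) ∈ ℍⁿ : t ∈ I}, there exists K = K(I) such that the diameter in ℝ²ⁿ of the set T(L) = ∪_{η∈L} T(η) is at most K. -/
open scoped RealInnerProductSpace Pointwise

noncomputable section

/-!
Fix a segment over the origin (left translation reduces to this case) and vectors `e`, `f`; write
`c = ω(e, f)` for the form `ω` of the group law. For `|β| ≤ 1/2` the horizontal plane through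
`(e + β f, 2 β c)` contains `(0, 2 β c)` and also the two points `(2 e ± f, ±c)`, which do not
depend on `β`. As `2 (e + β f)` lies on the segment joining `2 e - f` to `2 e + f`, monotonicity
carries an upper bound from the two fixed points to `e + β f` and from there to `0`, so that
`φ (e + β f)` is bounded for all `φ` over `(0, 2 β c)`, uniformly in `β`. The same for `(-e, -f)`
and `(f, e)` bounds `φ e`. Non-degeneracy of `ω` lets `2 β c` reach every height in a bounded set,
and Banach–Steinhaus turns the pointwise bounds into a norm bound.
-/

section HorizontalMonotonicity

variable {V : Type*} [NormedAddCommGroup V] [NormedSpace ℝ V]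
  {ω : LinearMap.BilinForm ℝ V} {T : V × ℝ → Set (StrongDual ℝ V)}

/-- Monotonicity along horizontal planes for a map from the Heisenberg group `V × ℝ` of the form `ω`
to the dual of `V`. The group law is `(z, t) ∘ (z', t') = (z + z', t + t' + ω z z')`, so that the
factor `2` in the group law of `ℍⁿ` is part of `ω`. -/
def IsHorizontallyMonotone (ω : LinearMap.BilinForm ℝ V) (T : V × ℝ → Set (StrongDual ℝ V)) :
    Prop :=
  ∀ p q, q.2 = p.2 + ω p.1 q.1 → ∀ φ ∈ T p, ∀ ψ ∈ T q, 0 ≤ (φ - ψ) (p.1 - q.1)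

/-- The pullback of `T` under the left translation by `(z₀, 0)` in the Heisenberg group of `ω`. -/
def leftTranslate (ω : LinearMap.BilinForm ℝ V) (z₀ : V) (T : V × ℝ → Set (StrongDual ℝ V)) :
    V × ℝ → Set (StrongDual ℝ V) :=
  fun p => T (z₀ + p.1, p.2 + ω z₀ p.1)

namespace IsHorizontallyMonotone

lemma apply_sub_le_apply_sub (hT : IsHorizontallyMonotone ω T) {p q : V × ℝ}
    (hpq : q.2 = p.2 + ω p.1 q.1) {φ ψ : StrongDual ℝ V} (hφ : φ ∈ T p) (hψ : ψ ∈ T q) :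
    φ (q.1 - p.1) ≤ ψ (q.1 - p.1) := by
  have h := hT p q hpq φ hφ ψ hψ
  rw [sub_apply, ← neg_sub q.1 p.1, map_neg, map_neg] at h
  linarith

lemma leftTranslate (hω : ω.IsAlt) (hT : IsHorizontallyMonotone ω T) (z₀ : V) :
    IsHorizontallyMonotone ω (leftTranslate ω z₀ T) := by
  intro p q hpq φ hφ ψ hψ
  have hpq' : q.2 + ω z₀ q.1 = p.2 + ω z₀ p.1 + ω (z₀ + p.1) (z₀ + q.1) := by
    simp only [map_add, LinearMap.add_apply, hω z₀, ← hω.neg_eq z₀ p.1, hpq]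
    ring
  simpa only [add_sub_add_left_eq_sub] using hT _ _ hpq' φ hφ ψ hψ

lemma apply_add_smul_le (hω : ω.IsAlt) (hT : IsHorizontallyMonotone ω T)
    (hdom : ∀ p, (T p).Nonempty) {e f : V} {β : ℝ} (hβ : β ∈ Set.Icc (-1 / 2 : ℝ) (1 / 2))
    {φ ψ₁ ψ₂ : StrongDual ℝ V} (hφ : φ ∈ T (0, 2 * β * ω e f))
    (hψ₁ : ψ₁ ∈ T ((2 : ℝ) • e + f, ω e f)) (hψ₂ : ψ₂ ∈ T ((2 : ℝ) • e - f, -ω e f)) :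
    φ (e + β • f) ≤
      (1 / 2 + β) * ψ₁ (e + (1 - β) • f) + (1 / 2 - β) * ψ₂ (e - (1 + β) • f) := by
  obtain ⟨χ, hχ⟩ := hdom (e + β • f, 2 * β * ω e f)
  have hφχ : φ (e + β • f) ≤ χ (e + β • f) := by
    simpa only [sub_zero] using hT.apply_sub_le_apply_sub (by simp) hφ hχ
  have hχψ₁ : χ (e + (1 - β) • f) ≤ ψ₁ (e + (1 - β) • f) := by
    have hω₁ : ω e f = 2 * β * ω e f + ω (e + β • f) ((2 : ℝ) • e + f) := by
      simp only [map_add, map_smul, LinearMap.add_apply, LinearMap.smul_apply, smul_eq_mul,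
        hω e, hω f, ← hω.neg_eq e f]
      ring
    have h := hT.apply_sub_le_apply_sub hω₁ hχ hψ₁
    rwa [show (2 : ℝ) • e + f - (e + β • f) = e + (1 - β) • f by module] at h
  have hχψ₂ : χ (e - (1 + β) • f) ≤ ψ₂ (e - (1 + β) • f) := by
    have hω₂ : -ω e f = 2 * β * ω e f + ω (e + β • f) ((2 : ℝ) • e - f) := by
      simp only [map_add, map_sub, map_smul, LinearMap.add_apply, LinearMap.smul_apply,
        smul_eq_mul, hω e, hω f, ← hω.neg_eq e f]
      ring
    have h := hT.apply_sub_le_apply_sub hω₂ hχ hψ₂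
    rwa [show (2 : ℝ) • e - f - (e + β • f) = e - (1 + β) • f by module] at h
  calc φ (e + β • f) ≤ χ (e + β • f) := hφχ
    _ = (1 / 2 + β) * χ (e + (1 - β) • f) + (1 / 2 - β) * χ (e - (1 + β) • f) := by
        simp only [map_add, map_sub, map_smul, smul_eq_mul]
        ring
    _ ≤ (1 / 2 + β) * ψ₁ (e + (1 - β) • f) + (1 / 2 - β) * ψ₂ (e - (1 + β) • f) :=
        add_le_add (mul_le_mul_of_nonneg_left hχψ₁ (by linarith [hβ.1]))
          (mul_le_mul_of_nonneg_left hχψ₂ (by linarith [hβ.2]))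

lemma exists_apply_add_smul_le (hω : ω.IsAlt) (hT : IsHorizontallyMonotone ω T)
    (hdom : ∀ p, (T p).Nonempty) (e f : V) :
    ∃ C, ∀ β ∈ Set.Icc (-1 / 2 : ℝ) (1 / 2), ∀ φ ∈ T (0, 2 * β * ω e f), φ (e + β • f) ≤ C := by
  obtain ⟨ψ₁, hψ₁⟩ := hdom ((2 : ℝ) • e + f, ω e f)
  obtain ⟨ψ₂, hψ₂⟩ := hdom ((2 : ℝ) • e - f, -ω e f)
  obtain ⟨C, hC⟩ := isCompact_Icc.bddAbove_image (K := Set.Icc (-1 / 2 : ℝ) (1 / 2))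
    (f := fun β => (1 / 2 + β) * ψ₁ (e + (1 - β) • f) + (1 / 2 - β) * ψ₂ (e - (1 + β) • f))
    (by fun_prop)
  exact ⟨C, fun β hβ φ hφ =>
    (hT.apply_add_smul_le hω hdom hβ hφ hψ₁ hψ₂).trans (hC (Set.mem_image_of_mem _ hβ))⟩

lemma exists_abs_apply_add_smul_le (hω : ω.IsAlt) (hT : IsHorizontallyMonotone ω T)
    (hdom : ∀ p, (T p).Nonempty) (e f : V) :
    ∃ C, ∀ β ∈ Set.Icc (-1 / 2 : ℝ) (1 / 2), ∀ φ ∈ T (0, 2 * β * ω e f),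
      |φ (e + β • f)| ≤ C := by
  obtain ⟨C₁, hC₁⟩ := hT.exists_apply_add_smul_le hω hdom e f
  obtain ⟨C₂, hC₂⟩ := hT.exists_apply_add_smul_le hω hdom (-e) (-f)
  refine ⟨max C₁ C₂, fun β hβ φ hφ => abs_le'.2 ⟨le_max_of_le_left (hC₁ β hβ φ hφ), ?_⟩⟩
  have h := hC₂ β hβ φ (by simpa using hφ)
  rw [smul_neg, ← neg_add, map_neg] at h
  exact le_max_of_le_right h

lemma exists_abs_apply_le (hω : ω.IsAlt) (hT : IsHorizontallyMonotone ω T)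
    (hdom : ∀ p, (T p).Nonempty) (e f : V) :
    ∃ C, ∀ β ∈ Set.Icc (-1 / 2 : ℝ) (1 / 2), ∀ φ ∈ T (0, 2 * β * ω e f), |φ e| ≤ C := by
  obtain ⟨C₁, hC₁⟩ := hT.exists_abs_apply_add_smul_le hω hdom e f
  obtain ⟨C₂, hC₂⟩ := hT.exists_abs_apply_add_smul_le hω hdom f e
  refine ⟨C₁ + C₂, fun β hβ φ hφ => ?_⟩
  have h₁ : |φ (e + β • f)| ≤ C₁ := hC₁ β hβ φ hφ
  have h₂ : |φ (f - β • e)| ≤ C₂ := by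
    have h := hC₂ (-β) ⟨by linarith [hβ.2], by linarith [hβ.1]⟩ φ
      (by simpa [← hω.neg_eq e f] using hφ)
    rwa [neg_smul, ← sub_eq_add_neg] at h
  have hβ' : |β| ≤ 1 := abs_le.2 ⟨by linarith [hβ.1], by linarith [hβ.2]⟩
  calc |φ e| ≤ (1 + β ^ 2) * |φ e| :=
        le_mul_of_one_le_left (abs_nonneg _) (le_add_of_nonneg_right (sq_nonneg β))
    _ = |φ (e + β • f) - β * φ (f - β • e)| := by
        rw [← abs_of_pos (by positivity : 0 < 1 + β ^ 2), ← abs_mul]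
        simp only [map_add, map_sub, map_smul, smul_eq_mul]
        ring_nf
    _ ≤ |φ (e + β • f)| + |β| * |φ (f - β • e)| := by
        rw [← abs_mul]
        exact abs_sub _ _
    _ ≤ C₁ + C₂ := add_le_add h₁ ((mul_le_of_le_one_left (abs_nonneg _) hβ').trans h₂)

lemma exists_abs_apply_le_of_isBounded (hω : ω.IsAlt) (hω' : ω.SeparatingLeft)
    (hT : IsHorizontallyMonotone ω T) (hdom : ∀ p, (T p).Nonempty) {I : Set ℝ}
    (hI : Bornology.IsBounded I) (e : V) :
    ∃ C, ∀ t ∈ I, ∀ φ ∈ T (0, t), |φ e| ≤ C := by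
  by_cases he : e = 0
  · exact ⟨0, fun t _ φ _ => by simp [he]⟩
  obtain ⟨f, hf⟩ : ∃ f, ω e f ≠ 0 := by
    by_contra! h
    exact he (hω' e h)
  obtain ⟨r, hr, hIr⟩ := hI.exists_pos_norm_le
  obtain ⟨C, hC⟩ := hT.exists_abs_apply_le hω hdom e ((r / ω e f) • f)
  have hωr : ω e ((r / ω e f) • f) = r := by
    rw [map_smul, smul_eq_mul, div_mul_cancel₀ _ hf]
  refine ⟨C, fun t ht φ hφ => hC (t / (2 * r)) ?_ φ ?_⟩
  · obtain ⟨hrt, htr⟩ := abs_le.1 (hIr t ht)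
    constructor
    · rw [le_div_iff₀ (by positivity)]
      linarith
    · rw [div_le_iff₀ (by positivity)]
      linarith
  · rwa [hωr, show 2 * (t / (2 * r)) * r = t by field_simp]

end IsHorizontallyMonotone

lemma isBounded_of_forall_exists_abs_apply_le [CompleteSpace V] {A : Set (StrongDual ℝ V)}
    (hA : ∀ e, ∃ C, ∀ φ ∈ A, |φ e| ≤ C) : Bornology.IsBounded A := by
  obtain ⟨C, hC⟩ := banach_steinhaus (g := ((↑) : A → StrongDual ℝ V)) fun e =>
    (hA e).imp fun _ h φ => h φ φ.2
  exact isBounded_iff_forall_norm_le.2 ⟨C, fun φ hφ => hC ⟨φ, hφ⟩⟩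

theorem bounded_on_vertical_segments_general [CompleteSpace V] (hω : ω.IsAlt)
    (hω' : ω.SeparatingLeft) (hT : IsHorizontallyMonotone ω T) (hdom : ∀ p, (T p).Nonempty)
    (z : V) {I : Set ℝ} (hI : Bornology.IsBounded I) :
    Bornology.IsBounded (⋃ t ∈ I, T (z, t)) := by
  refine isBounded_of_forall_exists_abs_apply_le fun e => ?_
  obtain ⟨C, hC⟩ := (hT.leftTranslate hω z).exists_abs_apply_le_of_isBounded hω hω'
    (fun p => hdom _) hI e
  refine ⟨C, fun φ hφ => ?_⟩
  obtain ⟨t, ht, hφt⟩ := Set.mem_iUnion₂.1 hφ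
  exact hC t ht φ (by simpa [leftTranslate] using hφt)

end HorizontalMonotonicity

section Heisenberg

variable {n : ℕ}

/-- The alternating form in the group law of `ℍⁿ`, including its factor `2`. -/
def heisForm (n : ℕ) : LinearMap.BilinForm ℝ (V1 n) :=
  LinearMap.mk₂ ℝ (fun z w => 2 * (⟪z.snd, w.fst⟫ - ⟪z.fst, w.snd⟫))
    (fun _ _ _ => by simp only [WithLp.add_fst, WithLp.add_snd, inner_add_left]; ring)
    (fun _ _ _ => by
      simp only [WithLp.smul_fst, WithLp.smul_snd, real_inner_smul_left, smul_eq_mul]; ring)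
    (fun _ _ _ => by simp only [WithLp.add_fst, WithLp.add_snd, inner_add_right]; ring)
    (fun _ _ _ => by
      simp only [WithLp.smul_fst, WithLp.smul_snd, real_inner_smul_right, smul_eq_mul]; ring)

lemma heisForm_apply (z w : V1 n) :
    heisForm n z w = 2 * (⟪z.snd, w.fst⟫ - ⟪z.fst, w.snd⟫) := rfl

lemma heisForm_isAlt : (heisForm n).IsAlt := fun z => by
  rw [heisForm_apply, real_inner_comm, sub_self, mul_zero]

lemma heisForm_separatingLeft : (heisForm n).SeparatingLeft := fun z hz => by
  have h : 2 * (‖z.snd‖ ^ 2 + ‖z.fst‖ ^ 2) = 0 := by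
    simpa [heisForm_apply] using hz (WithLp.toLp 2 (z.snd, -z.fst))
  have hfst : z.fst = 0 := by
    rw [← norm_eq_zero, ← sq_eq_zero_iff]
    linarith [sq_nonneg ‖z.fst‖, sq_nonneg ‖z.snd‖]
  have hsnd : z.snd = 0 := by
    rw [← norm_eq_zero, ← sq_eq_zero_iff]
    linarith [sq_nonneg ‖z.fst‖, sq_nonneg ‖z.snd‖]
  exact WithLp.ofLp_injective 2 (Prod.ext hfst hsnd)

lemma xi1_fst_snd (z : V1 n) (t : ℝ) : xi1 (z.fst, z.snd, t) = z := rfl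

lemma mem_Hplane_iff_s8 {p q : V1 n × ℝ} :
    ((q.1.fst, q.1.snd, q.2) : Heis n) ∈ Hplane (p.1.fst, p.1.snd, p.2) ↔
      q.2 = p.2 + heisForm n p.1 q.1 :=
  Iff.rfl

/-- A set-valued map `ℍⁿ ⇉ V₁` as a map into the dual of `V₁`, through the Riesz isometry, with `ℍⁿ`
written as `V₁ × ℝ`. -/
def rieszDual (T : Heis n → Set (V1 n)) : V1 n × ℝ → Set (StrongDual ℝ (V1 n)) :=
  fun p => InnerProductSpace.toDual ℝ (V1 n) '' T (p.1.fst, p.1.snd, p.2)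

namespace IsHMonotone

variable {T : Heis n → Set (V1 n)}

lemma isHorizontallyMonotone_rieszDual (hT : IsHMonotone T) :
    IsHorizontallyMonotone (heisForm n) (rieszDual T) := by
  rintro p q hpq _ ⟨v, hv, rfl⟩ _ ⟨w, hw, rfl⟩
  rw [← map_sub, InnerProductSpace.toDual_apply_apply, ← xi1_fst_snd p.1 p.2,
    ← xi1_fst_snd q.1 q.2]
  exact hT _ _ (mem_Hplane_iff_s8.2 hpq) v hv w hw

lemma isBounded_iUnion_vertical (hT : IsHMonotone T) (hdom : ∀ η, (T η).Nonempty) (x y : E n)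
    {I : Set ℝ} (hI : Bornology.IsBounded I) : Bornology.IsBounded (⋃ t ∈ I, T (x, y, t)) := by
  have h := bounded_on_vertical_segments_general heisForm_isAlt heisForm_separatingLeft
    hT.isHorizontallyMonotone_rieszDual (fun p => (hdom _).image _) (WithLp.toLp 2 (x, y)) hI
  simp only [rieszDual, ← Set.image_iUnion₂] at h
  exact ((InnerProductSpace.toDual ℝ (V1 n)).isometry.antilipschitz.isBounded_preimage h).subset
    (Set.subset_preimage_image _ _)

end IsHMonotone

end Heisenberg

/-- Proposition 3.1: a maximal H-monotone map with full domain is bounded on every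
vertical segment L = {(x,y,t) : t ∈ [a,b]}: the image T(L) has bounded diameter in ℝ²ⁿ. -/
theorem bounded_on_vertical_segments {n : ℕ} (hn : 1 ≤ n)
    (T : Heis n → Set (V1 n)) (hT : IsMaximalHMonotone T)
    (hdom : ∀ η, (T η).Nonempty) :
    ∀ (x y : E n) (a b : ℝ), ∃ K : ℝ,
      ∀ t ∈ Set.Icc a b, ∀ t' ∈ Set.Icc a b,
        ∀ v ∈ T (x, y, t), ∀ v' ∈ T (x, y, t'), ‖v - v'‖ ≤ K := by
  intro x y a b
  obtain ⟨K, hK⟩ := Metric.isBounded_iff.1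
    (hT.1.isBounded_iUnion_vertical hdom x y (Metric.isBounded_Icc a b))
  exact ⟨K, fun t ht t' ht' v hv v' hv' => dist_eq_norm v v' ▸
    hK (Set.mem_biUnion ht hv) (Set.mem_biUnion ht' hv')⟩
end
end
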